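/- arXiv:2001.01308 — 2 statements merged into one kernel-verified Lean document; each statement's English description precedes it below -/
import Mathlib

section
/- Let n be an integer with 3 < n < 9. Then every finite 3-subgroup of GLₙ(ℂ) can be generated by n elements. -/
open Matrix

/-- A group `G` can be generated by at most `m` elements. -/
def GeneratedByAtMost (G : Type*) [Group G] (m : ℕ) : Prop :=
  ∃ S : Finset G, S.card ≤ m ∧ Subgroup.closure (S : Set G) = ⊤

/-!
Let `G` be a finite `p`-group, `p` odd, acting faithfully on a space of dimension less than `p ^ 2`,
and let `A` be a self-centralizing abelian normal subgroup. The weights of `A` are permuted by `G`;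
their pointwise stabilizer centralizes `A`, hence lies in `A`, and their common kernel is trivial.
There are fewer than `p ^ 2` weights, so every orbit has `1` or `p` elements. It suffices that each
orbit `O` contributes at most `|O|` generators (as normal subgroups) to the quotient of `G` by the
stabilizer and the quotient of `A` by the common kernel of `O` together. A fixed weight contributes
one, as its image is cyclic. An orbit of size `p` contributes one to `G`, whose quotient has order
`p`, and two to `A`, so three in total, and `3 ≤ p`: the product `ν` of `O` is `G`-invariant with
cyclic image, and in `ker ν` the elements that commute with a generator `σ` of the action on `O`
have values of order dividing `p` that are constant on `O`. So the kernel of `⁅σ, ·⁆` has at most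
`p` elements modulo the common kernel of `O`, and the same holds for its cokernel.
-/

open scoped IsMulCommutative commutatorElement

section Index

variable {G Q M : Type*} [Group G] [Group Q] [CommGroup M]

lemma exists_mem_le_zpowers_sup_ker (f : G →* Q) (N : Subgroup G) [IsCyclic (N.map f)] :
    ∃ x ∈ N, N ≤ Subgroup.zpowers x ⊔ f.ker := by
  obtain ⟨⟨_, x, hx, rfl⟩, hgen⟩ := IsCyclic.exists_generator (α := N.map f)
  refine ⟨x, hx, fun n hn ↦ ?_⟩
  obtain ⟨k, hk⟩ := Subgroup.mem_zpowers_iff.mp (hgen ⟨f n, n, hn, rfl⟩)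
  have hfk : f x ^ k = f n := congrArg Subtype.val hk
  rw [← mul_inv_cancel_left (x ^ k) n]
  refine Subgroup.mul_mem_sup (Subgroup.zpow_mem_zpowers x k) ?_
  rw [MonoidHom.mem_ker, map_mul, map_inv, map_zpow, hfk, inv_mul_cancel]

lemma exists_mem_le_zpowers_sup_of_relIndex_dvd_prime {p : ℕ} [Fact p.Prime]
    {H N : Subgroup G} [H.Normal] (h : H.relIndex N ∣ p) :
    ∃ x ∈ N, N ≤ Subgroup.zpowers x ⊔ H := by
  have : IsCyclic (N.map (QuotientGroup.mk' H)) := isCyclic_of_card_dvd_prime (p := p) <| by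
    rwa [← Subgroup.relIndex_ker, QuotientGroup.ker_mk']
  simpa only [QuotientGroup.ker_mk'] using
    exists_mem_le_zpowers_sup_ker (QuotientGroup.mk' H) N

-- The endomorphism of `M ⧸ B` induced by `γ` has kernel and cokernel of the same order.
lemma index_range_sup_eq_relIndex_comap [Finite M] (γ : M →* M) {B : Subgroup M}
    (hB : B ≤ B.comap γ) : (γ.range ⊔ B).index = B.relIndex (B.comap γ) := by
  have hcoker : B.relIndex γ.range * (γ.range ⊔ B).index = B.index := by
    rw [← Subgroup.relIndex_sup_right, Subgroup.relIndex_mul_index le_sup_right]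
  have hker : B.relIndex (B.comap γ) * B.relIndex γ.range = B.index := by
    rw [← Subgroup.index_comap, Subgroup.relIndex_mul_index hB]
  have hpos : 0 < B.relIndex γ.range := Nat.pos_of_ne_zero Subgroup.FiniteIndex.index_ne_zero
  exact Nat.eq_of_mul_eq_mul_left hpos (by rw [hcoker, ← hker, mul_comm])

lemma card_dvd_of_forall_pow_eq_one {R : Type*} [CommRing R] [IsDomain R] {n : ℕ}
    (H : Subgroup Rˣ) [Finite H] (h : ∀ u ∈ H, u ^ n = 1) : Nat.card H ∣ n := by
  rw [← IsCyclic.exponent_eq_card]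
  exact Monoid.exponent_dvd_of_forall_pow_eq_one fun u ↦ Subtype.ext (h u u.2)

end Index

/-- The endomorphism `n ↦ ⁅σ, n⁆` of an abelian normal subgroup. -/
def commutatorHom {G : Type*} [Group G] (N : Subgroup G) [N.Normal] [IsMulCommutative N]
    (σ : G) : N →* N :=
  (MulAut.conjNormal σ : N ≃* N).toMonoidHom / MonoidHom.id N

lemma coe_commutatorHom {G : Type*} [Group G] (N : Subgroup G) [N.Normal] [IsMulCommutative N]
    (σ : G) (n : N) : (commutatorHom N σ n : G) = ⁅σ, (n : G)⁆ := by
  simp [commutatorHom, commutatorElement_def, div_eq_mul_inv]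

section Nilpotent

variable {G : Type*} [Group G] [Group.IsNilpotent G]

lemma eq_bot_of_le_commutator_top {N : Subgroup G} (h : N ≤ ⁅N, ⊤⁆) : N = ⊥ := by
  obtain ⟨n, hn⟩ := Subgroup.nilpotent_iff_lowerCentralSeries.mp ‹Group.IsNilpotent G›
  have hle (k : ℕ) : N ≤ (⊤ : Subgroup G).lowerCentralSeries k := by
    induction k with
    | zero => exact le_top
    | succ k ih => exact h.trans (Subgroup.commutator_mono ih le_rfl)
  exact le_bot_iff.mp (hn ▸ hle n)

lemma le_of_le_sup_commutator_top {N P : Subgroup G} [P.Normal] (h : N ≤ P ⊔ ⁅N, ⊤⁆) :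
    N ≤ P := by
  have hmap : N.map (QuotientGroup.mk' P) ≤ ⁅N.map (QuotientGroup.mk' P), ⊤⁆ := by
    have := Subgroup.map_mono (f := QuotientGroup.mk' P) h
    rwa [Subgroup.map_sup, QuotientGroup.map_mk'_self, bot_sup_eq, Subgroup.map_commutator,
      Subgroup.map_top_of_surjective _ (QuotientGroup.mk'_surjective P)] at this
  simpa only [QuotientGroup.ker_mk'] using
    (Subgroup.map_eq_bot_iff N).mp (eq_bot_of_le_commutator_top hmap)

variable [Finite G]

lemma closure_eq_top_of_normalClosure_eq_top {S : Set G} (h : Subgroup.normalClosure S = ⊤) :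
    Subgroup.closure S = ⊤ := by
  by_contra hS
  obtain ⟨M, hM, hle⟩ := (eq_top_or_exists_le_coatom (Subgroup.closure S)).resolve_left hS
  have : M.Normal :=
    Subgroup.NormalizerCondition.normal_of_coatom M Group.normalizerCondition_of_isNilpotent hM
  exact hM.1 (top_le_iff.mp (h ▸ Subgroup.normalClosure_le_normal
    (Subgroup.subset_closure.trans hle)))

lemma exists_mem_notMem_forall_commutator_mem {C A : Subgroup G} [C.Normal] (h : ¬ C ≤ A) :
    ∃ x ∈ C, x ∉ A ∧ ∀ g, ⁅x, g⁆ ∈ A := by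
  obtain ⟨H, ⟨hHn, hHC, hHA⟩, hmin⟩ := exists_minimal_of_wellFoundedLT
    (fun H : Subgroup G ↦ H.Normal ∧ H ≤ C ∧ ¬ H ≤ A) ⟨C, inferInstance, le_rfl, h⟩
  have hcomm : ⁅H, ⊤⁆ ≤ A := by
    by_contra hA
    have hHH := hmin ⟨inferInstance, (Subgroup.commutator_le_left H ⊤).trans hHC, hA⟩
      (Subgroup.commutator_le_left H ⊤)
    exact hHA ((eq_bot_of_le_commutator_top hHH).trans_le bot_le)
  obtain ⟨x, hxH, hxA⟩ := SetLike.not_le_iff_exists.mp hHA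
  exact ⟨x, hHC hxH, hxA, fun g ↦
    hcomm (Subgroup.commutator_mem_commutator hxH (Subgroup.mem_top g))⟩

variable (G) in
lemma exists_normal_isMulCommutative_centralizer_le :
    ∃ A : Subgroup G, A.Normal ∧ IsMulCommutative A ∧ Subgroup.centralizer (A : Set G) ≤ A := by
  obtain ⟨A, ⟨hAn, hAc⟩, hmax⟩ := exists_maximal_of_wellFoundedGT
    (fun A : Subgroup G ↦ A.Normal ∧ IsMulCommutative A) ⟨⊥, inferInstance, inferInstance⟩
  refine ⟨A, hAn, hAc, by_contra fun hC ↦ ?_⟩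
  obtain ⟨x, hxC, hxA, hx⟩ := exists_mem_notMem_forall_commutator_mem hC
  have hle : A ⊔ Subgroup.zpowers x ≤ Subgroup.upperCentralSeriesStep A := by
    refine sup_le (fun a ha g ↦ ?_) (Subgroup.zpowers_le.mpr hx)
    exact Subgroup.commutator_le_left A ⊤
      (Subgroup.commutator_mem_commutator ha (Subgroup.mem_top g))
  have hnormal : (A ⊔ Subgroup.zpowers x).Normal := by
    refine ⟨fun n hn g ↦ ?_⟩
    have hcomm : ⁅g, n⁆ ∈ A := commutatorElement_inv n g ▸ inv_mem (hle hn g)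
    simpa [commutatorElement_def] using mul_mem (Subgroup.mem_sup_left hcomm) hn
  have hcommutative : IsMulCommutative (A ⊔ Subgroup.zpowers x : Subgroup G) := by
    rw [← Subgroup.closure_eq A, Subgroup.zpowers_eq_closure, ← Subgroup.closure_union]
    refine Subgroup.isMulCommutative_closure ?_
    rintro a (ha | rfl) b (hb | rfl)
    · exact setLike_mul_comm ha hb
    · exact hxC a ha
    · exact (hxC b hb).symm
    · rfl
  exact hxA (hmax ⟨hnormal, hcommutative⟩ le_sup_left
    (Subgroup.mem_sup_right (Subgroup.mem_zpowers x)))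

-- The hypothesis says that the centralizer of `σ` in `N ⧸ B` has order dividing `p`; hence so does
-- the cokernel of `⁅σ, ·⁆`, and by nilpotency a generator of this cokernel suffices.
lemma exists_mem_le_normalClosure_sup {p : ℕ} [Fact p.Prime] {N B : Subgroup G} [N.Normal]
    [B.Normal] [IsMulCommutative N] (σ : G)
    (h : (B.subgroupOf N).relIndex ((B.subgroupOf N).comap (commutatorHom N σ)) ∣ p) :
    ∃ x ∈ N, N ≤ Subgroup.normalClosure {x} ⊔ B := by
  have hB : B.subgroupOf N ≤ (B.subgroupOf N).comap (commutatorHom N σ) := fun b hb ↦ by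
    rw [Subgroup.mem_comap, Subgroup.mem_subgroupOf, coe_commutatorHom]
    exact Subgroup.commutator_le_right ⊤ B
      (Subgroup.commutator_mem_commutator (Subgroup.mem_top σ) hb)
  rw [← index_range_sup_eq_relIndex_comap _ hB, ← Subgroup.relIndex_top_right] at h
  obtain ⟨x, -, hx⟩ := exists_mem_le_zpowers_sup_of_relIndex_dvd_prime h
  refine ⟨x, x.2, le_of_le_sup_commutator_top ?_⟩
  have hrange : (commutatorHom N σ).range.map N.subtype ≤ ⁅N, ⊤⁆ := by
    rintro _ ⟨_, ⟨n, rfl⟩, rfl⟩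
    rw [Subgroup.subtype_apply, coe_commutatorHom, Subgroup.commutator_comm]
    exact Subgroup.commutator_mem_commutator (Subgroup.mem_top σ) n.2
  calc
    N = (⊤ : Subgroup N).map N.subtype := by
      rw [← MonoidHom.range_eq_map, Subgroup.range_subtype]
    _ ≤ _ := Subgroup.map_mono hx
    _ = Subgroup.zpowers (x : G) ⊔
        ((commutatorHom N σ).range.map N.subtype ⊔ (B.subgroupOf N).map N.subtype) := by
      rw [Subgroup.map_sup, Subgroup.map_sup, MonoidHom.map_zpowers, Subgroup.subtype_apply]
    _ ≤ Subgroup.normalClosure {(x : G)} ⊔ (⁅N, ⊤⁆ ⊔ B) := by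
      gcongr
      · exact Subgroup.zpowers_le.mpr (Subgroup.subset_normalClosure (Set.mem_singleton _))
      · rw [Subgroup.subgroupOf_map_subtype]
        exact inf_le_left
    _ = _ := by ac_rfl

end Nilpotent

lemma GeneratedByAtMost.mono {G : Type*} [Group G] {m n : ℕ} (h : GeneratedByAtMost G m)
    (hmn : m ≤ n) : GeneratedByAtMost G n :=
  let ⟨S, hS, htop⟩ := h
  ⟨S, hS.trans hmn, htop⟩

/-- `NormalRankLE X K m`: every normal subgroup contained in `X` is, modulo `K`, the normal closure
of at most `m` of its elements. Unlike generation of a single subgroup, this is additive along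
chains of normal subgroups, see `NormalRankLE.inf`. -/
def NormalRankLE {G : Type*} [Group G] (X K : Subgroup G) (m : ℕ) : Prop :=
  ∀ N : Subgroup G, N.Normal → N ≤ X →
    ∃ S : Finset G, (S : Set G) ⊆ N ∧ S.card ≤ m ∧ N ≤ Subgroup.normalClosure (S : Set G) ⊔ K

namespace NormalRankLE

variable {G : Type*} [Group G] {X Y K L : Subgroup G} {a b m : ℕ}

lemma mono_left (h : NormalRankLE Y K m) (hXY : X ≤ Y) : NormalRankLE X K m :=
  fun N hN hNX ↦ h N hN (hNX.trans hXY)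

lemma mono_right (h : NormalRankLE X K m) (hKL : K ≤ L) : NormalRankLE X L m := by
  intro N hN hNX
  obtain ⟨S, hS, hcard, hle⟩ := h N hN hNX
  exact ⟨S, hS, hcard, hle.trans (sup_le_sup_left hKL _)⟩

lemma of_le (h : X ≤ K) : NormalRankLE X K 0 :=
  fun _ _ hNX ↦ ⟨∅, by simp, by simp, (hNX.trans h).trans le_sup_right⟩

lemma one_of_exists_mem
    (h : ∀ N : Subgroup G, N.Normal → N ≤ X → ∃ x ∈ N, N ≤ Subgroup.normalClosure {x} ⊔ K) :
    NormalRankLE X K 1 := by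
  intro N hN hNX
  obtain ⟨x, hx, hle⟩ := h N hN hNX
  exact ⟨{x}, by simpa using hx, by simp, by simpa using hle⟩

lemma one_of_exists_mem_zpowers
    (h : ∀ N : Subgroup G, N.Normal → N ≤ X → ∃ x ∈ N, N ≤ Subgroup.zpowers x ⊔ K) :
    NormalRankLE X K 1 :=
  one_of_exists_mem fun N hN hNX ↦
    let ⟨x, hx, hle⟩ := h N hN hNX
    ⟨x, hx, hle.trans (sup_le_sup_right (Subgroup.zpowers_le.mpr
      (Subgroup.subset_normalClosure (Set.mem_singleton x))) K)⟩

lemma one_of_index_prime [K.Normal] (h : K.index.Prime) : NormalRankLE X K 1 :=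
  have : Fact K.index.Prime := ⟨h⟩
  one_of_exists_mem_zpowers fun N _ _ ↦
    exists_mem_le_zpowers_sup_of_relIndex_dvd_prime (Subgroup.relIndex_dvd_index_of_normal K N)

lemma inf [K.Normal] (h₁ : NormalRankLE X K a) (h₂ : NormalRankLE (X ⊓ K) L b) :
    NormalRankLE X (K ⊓ L) (a + b) := by
  classical
  intro N hN hNX
  obtain ⟨S, hSN, hSa, hS⟩ := h₁ N hN hNX
  obtain ⟨T, hTNK, hTb, hT⟩ := h₂ (N ⊓ K) inferInstance (inf_le_inf_right K hNX)
  refine ⟨S ∪ T, ?_, (Finset.card_union_le S T).trans (add_le_add hSa hTb), ?_⟩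
  · rw [Finset.coe_union]
    exact Set.union_subset hSN (hTNK.trans inf_le_left)
  intro n hn
  obtain ⟨s, hs, k, hk, rfl⟩ := Subgroup.mem_sup_of_normal_left.mp (hS hn)
  have hkN : k ∈ N :=
    (N.mul_mem_cancel_left (Subgroup.normalClosure_le_normal hSN hs)).mp hn
  obtain ⟨t, ht, l, hl, rfl⟩ := Subgroup.mem_sup_of_normal_left.mp (hT ⟨hkN, hk⟩)
  have hlK : l ∈ K :=
    (K.mul_mem_cancel_left (Subgroup.normalClosure_le_normal hTNK ht).2).mp hk
  rw [← mul_assoc]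
  refine Subgroup.mul_mem_sup (mul_mem ?_ ?_) ⟨hlK, hl⟩
  · exact Subgroup.normalClosure_mono (by simp) hs
  · exact Subgroup.normalClosure_mono (by simp) ht

lemma generatedByAtMost [Finite G] [Group.IsNilpotent G]
    (h : NormalRankLE (⊤ : Subgroup G) ⊥ m) : GeneratedByAtMost G m := by
  obtain ⟨S, -, hcard, htop⟩ := h ⊤ inferInstance le_rfl
  rw [sup_bot_eq, top_le_iff] at htop
  exact ⟨S, hcard, closure_eq_top_of_normalClosure_eq_top htop⟩

end NormalRankLE

section Action

variable {G α : Type*} [Group G] [MulAction G α]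

lemma fixingSubgroup_normal_of_stable {Ω : Set α} (hΩ : ∀ g : G, ∀ x ∈ Ω, g • x ∈ Ω) :
    (fixingSubgroup G Ω).Normal := by
  refine ⟨fun c hc g ↦ ?_⟩
  rw [mem_fixingSubgroup_iff] at hc ⊢
  intro x hx
  rw [mul_smul, mul_smul, hc _ (hΩ g⁻¹ x hx), smul_inv_smul]

lemma stabilizer_le_fixingSubgroup_orbit {x : α} [(MulAction.stabilizer G x).Normal] :
    MulAction.stabilizer G x ≤ fixingSubgroup G (MulAction.orbit G x) := by
  intro c hc
  rw [mem_fixingSubgroup_iff]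
  rintro _ ⟨g, rfl⟩
  have hfix : (g⁻¹ * c * g⁻¹⁻¹) • x = x := Subgroup.Normal.conj_mem inferInstance c hc g⁻¹
  rwa [inv_inv, mul_smul, mul_smul, inv_smul_eq_iff] at hfix

variable {p : ℕ} [Fact p.Prime]

lemma normal_of_index_eq_prime [Finite G] (hG : IsPGroup p G) {H : Subgroup G}
    (h : H.index = p) : H.Normal := by
  obtain ⟨k, hk⟩ := IsPGroup.iff_card.mp hG
  have hk0 : k ≠ 0 := by
    rintro rfl
    have hdvd := H.index_dvd_card
    rw [h, hk, pow_zero] at hdvd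
    exact (Fact.out : p.Prime).not_dvd_one hdvd
  exact Subgroup.normal_of_index_eq_minFac_card (by rw [h, hk, (Fact.out : p.Prime).pow_minFac hk0])

lemma exists_orbit_zpowers_eq_of_ncard_orbit_eq_prime (hG : IsPGroup p G) {x : α}
    (hx : (MulAction.orbit G x).ncard = p) :
    ∃ σ : G, MulAction.orbit (Subgroup.zpowers σ) x = MulAction.orbit G x := by
  have hp : p.Prime := Fact.out
  have hfin : (MulAction.orbit G x).Finite := Set.finite_of_ncard_pos (hx ▸ hp.pos)
  obtain ⟨σ, hσ⟩ : ∃ σ : G, σ • x ≠ x := by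
    by_contra! hfix
    have : MulAction.orbit G x ⊆ {x} := Set.range_subset_iff.mpr hfix
    exact hp.one_lt.not_ge (hx ▸ (Set.ncard_le_ncard this).trans_eq (Set.ncard_singleton x))
  have hsub : MulAction.orbit (Subgroup.zpowers σ) x ⊆ MulAction.orbit G x :=
    MulAction.orbit_subgroup_subset _ _
  have := (hfin.subset hsub).to_subtype
  obtain ⟨k, hk⟩ := (hG.to_subgroup (Subgroup.zpowers σ)).card_orbit x
  rw [Nat.card_coe_set_eq] at hk
  have hk0 : k ≠ 0 := by
    rintro rfl
    obtain ⟨y, hy⟩ := Set.ncard_eq_one.mp hk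
    have hσx : σ • x ∈ MulAction.orbit (Subgroup.zpowers σ) x :=
      MulAction.mem_orbit x (⟨σ, Subgroup.mem_zpowers σ⟩ : Subgroup.zpowers σ)
    have hxx := MulAction.mem_orbit_self (M := Subgroup.zpowers σ) x
    rw [hy, Set.mem_singleton_iff] at hσx hxx
    exact hσ (hσx.trans hxx.symm)
  refine ⟨σ, Set.eq_of_subset_of_ncard_le hsub ?_ hfin⟩
  rw [hx, hk]
  exact Nat.le_self_pow hk0 p

end Action

section CommonKer

variable {G M : Type*} [Group G] [CommGroup M] {A : Subgroup G}

/-- The common kernel of a set of characters of `A`, as a subgroup of the ambient group. -/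
def commonKer (Ω : Set (A →* M)) : Subgroup G :=
  (⨅ χ ∈ Ω, χ.ker).map A.subtype

lemma coe_mem_commonKer {Ω : Set (A →* M)} {a : A} :
    (a : G) ∈ commonKer Ω ↔ ∀ χ ∈ Ω, χ a = 1 := by
  simp [commonKer, MonoidHom.mem_ker]

lemma commonKer_le (Ω : Set (A →* M)) : commonKer Ω ≤ A :=
  Subgroup.map_subtype_le _

lemma commonKer_empty : commonKer (∅ : Set (A →* M)) = A := by
  simp [commonKer, ← MonoidHom.range_eq_map]

lemma commonKer_union (Ω Ψ : Set (A →* M)) :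
    commonKer (Ω ∪ Ψ) = commonKer Ω ⊓ commonKer Ψ := by
  rw [commonKer, iInf_union, Subgroup.map_inf _ _ _ A.subtype_injective]
  rfl

lemma normalRankLE_commonKer_singleton [Finite G] {R : Type*} [CommRing R] [IsDomain R]
    (χ : A →* Rˣ) : NormalRankLE A (commonKer {χ}) 1 := by
  have hfin (H : Subgroup A) : Finite (H.map χ) := inferInstanceAs (Finite (χ '' H))
  refine .one_of_exists_mem_zpowers fun N _ hNA ↦ ?_
  obtain ⟨x, hx, hle⟩ := exists_mem_le_zpowers_sup_ker χ (N.subgroupOf A)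
  refine ⟨x, hx, ?_⟩
  have hmap := Subgroup.map_mono (f := A.subtype) hle
  rw [Subgroup.map_subgroupOf_eq_of_le hNA, Subgroup.map_sup, MonoidHom.map_zpowers] at hmap
  simpa [commonKer] using hmap

end CommonKer

section ConjugateCharacters

variable {G M : Type*} [Group G] [CommGroup M] {A : Subgroup G} [A.Normal]

/-- The action of a group on the characters of a normal subgroup by conjugation. It is only a local
instance, since other actions on homomorphisms are possible. -/
abbrev conjCharacterAction (A : Subgroup G) [A.Normal] : MulDistribMulAction G (A →* M) where
  smul g χ := χ.comp (MulAut.conjNormal g⁻¹ : A ≃* A).toMonoidHom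
  one_smul χ := MonoidHom.ext fun a ↦ congrArg χ (by simp)
  mul_smul g h χ := MonoidHom.ext fun a ↦ congrArg χ (by
    change MulAut.conjNormal (g * h)⁻¹ a = MulAut.conjNormal h⁻¹ (MulAut.conjNormal g⁻¹ a)
    rw [_root_.mul_inv_rev, map_mul, MulAut.mul_apply])
  smul_one _ := rfl
  smul_mul _ _ _ := rfl

attribute [local instance] conjCharacterAction

lemma conjCharacter_smul_apply (g : G) (χ : A →* M) (a : A) :
    (g • χ) a = χ (MulAut.conjNormal g⁻¹ a) := rfl

lemma commonKer_normal_of_stable {Ω : Set (A →* M)} (hΩ : ∀ g : G, ∀ χ ∈ Ω, g • χ ∈ Ω) :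
    (commonKer Ω).Normal := by
  refine ⟨fun a ha g ↦ ?_⟩
  lift a to A using commonKer_le Ω ha
  rw [coe_mem_commonKer] at ha
  rw [← MulAut.conjNormal_apply, coe_mem_commonKer]
  intro χ hχ
  rw [← ha _ (hΩ g⁻¹ χ hχ), conjCharacter_smul_apply, inv_inv]

lemma apply_eq_of_mem_orbit_zpowers {Ω : Set (A →* M)} (hΩ : ∀ g : G, ∀ χ ∈ Ω, g • χ ∈ Ω)
    {σ : G} {a : A} (ha : ⁅σ, (a : G)⁆ ∈ commonKer Ω) {χ ψ : A →* M} (hχ : χ ∈ Ω)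
    (hψ : ψ ∈ MulAction.orbit (Subgroup.zpowers σ) χ) : ψ a = χ a := by
  have hσ (φ : A →* M) (hφ : φ ∈ Ω) : (σ⁻¹ • φ) a = φ a := by
    have hcomm : ((MulAut.conjNormal σ a * a⁻¹ : A) : G) ∈ commonKer Ω := by
      simpa [commutatorElement_def] using ha
    have := coe_mem_commonKer.mp hcomm φ hφ
    rwa [map_mul, map_inv φ, mul_inv_eq_one, ← inv_inv σ, ← conjCharacter_smul_apply] at this
  obtain ⟨⟨_, k, rfl⟩, rfl⟩ := hψ
  change (σ ^ k • χ) a = χ a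
  refine zpow_induction_left (P := fun g ↦ (g • χ) a = χ a) ?_ (fun g ih ↦ ?_) (fun g ih ↦ ?_) k
  · rw [one_smul]
  · rw [← hσ _ (hΩ _ _ hχ), mul_smul, inv_smul_smul, ih]
  · rw [mul_smul, hσ _ (hΩ _ _ hχ), ih]

lemma fixingSubgroup_le_centralizer {Ω : Set (A →* M)} (hΩ : commonKer Ω = ⊥) :
    fixingSubgroup G Ω ≤ Subgroup.centralizer (A : Set G) := by
  intro g hg
  rw [Subgroup.mem_centralizer_iff]
  intro a ha
  lift a to A using ha
  have hfix : ((MulAut.conjNormal g⁻¹ a * a⁻¹ : A) : G) ∈ commonKer Ω :=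
    coe_mem_commonKer.mpr fun χ hχ ↦ by
      rw [map_mul, map_inv χ, mul_inv_eq_one, ← conjCharacter_smul_apply,
        (mem_fixingSubgroup_iff G).mp hg χ hχ]
  rw [hΩ, Subgroup.mem_bot] at hfix
  have hconj : g⁻¹ * a * g = a := by simpa [mul_inv_eq_one] using hfix
  rwa [mul_assoc, inv_mul_eq_iff_eq_mul] at hconj

lemma smul_prod_orbit (g : G) (χ : A →* M) [Fintype (MulAction.orbit G χ)] :
    g • ∏ ψ : MulAction.orbit G χ, (ψ : A →* M) = ∏ ψ : MulAction.orbit G χ, (ψ : A →* M) := by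
  rw [Finset.smul_prod']
  exact Equiv.prod_comp (MulAction.toPerm g) fun ψ : MulAction.orbit G χ ↦ (ψ : A →* M)

variable [Finite G] {R : Type*} [CommRing R] [IsDomain R] {p : ℕ} [Fact p.Prime]

-- On elements of `N` which commute with `σ` modulo `commonKer Ω`, all characters in `Ω` agree, so
-- the `|Ω|`-th power of their common value is the value of their product.
lemma relIndex_comap_commutatorHom_dvd_card {N : Subgroup G} [N.Normal] [IsMulCommutative N]
    {Ω : Set (A →* Rˣ)} [Fintype Ω] (hΩ : ∀ g : G, ∀ χ ∈ Ω, g • χ ∈ Ω) {σ : G} {χ : A →* Rˣ}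
    (hσ : MulAction.orbit (Subgroup.zpowers σ) χ = Ω)
    (hN : N ≤ A ⊓ commonKer {∏ ψ : Ω, (ψ : A →* Rˣ)}) :
    ((commonKer Ω).subgroupOf N).relIndex
      (((commonKer Ω).subgroupOf N).comap (commutatorHom N σ)) ∣ Nat.card Ω := by
  set C := ((commonKer Ω).subgroupOf N).comap (commutatorHom N σ)
  let ι : N →* A := Subgroup.inclusion (hN.trans inf_le_left)
  have hconst (c : N) (hc : c ∈ C) (ψ : A →* Rˣ) (hψ : ψ ∈ Ω) : ψ (ι c) = χ (ι c) := by
    rw [Subgroup.mem_comap, Subgroup.mem_subgroupOf, coe_commutatorHom] at hc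
    exact apply_eq_of_mem_orbit_zpowers (a := ι c) hΩ hc (hσ ▸ MulAction.mem_orbit_self χ)
      (hσ ▸ hψ)
  have hpow (c : N) (hc : c ∈ C) : χ (ι c) ^ Nat.card Ω = 1 := by
    calc
      χ (ι c) ^ Nat.card Ω = ∏ _ψ : Ω, χ (ι c) := by
        rw [Finset.prod_const, Finset.card_univ, ← Nat.card_eq_fintype_card]
      _ = (∏ ψ : Ω, (ψ : A →* Rˣ)) (ι c) := by
        rw [MonoidHom.finsetProd_apply]
        exact Finset.prod_congr rfl fun ψ _ ↦ (hconst c hc ψ ψ.2).symm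
      _ = 1 := (coe_mem_commonKer (a := ι c)).mp (hN c.2).2 _ rfl
  have hker : (χ.comp ι).ker ⊓ C ≤ (commonKer Ω).subgroupOf N := fun c ⟨hχc, hc⟩ ↦
    coe_mem_commonKer.mpr fun ψ hψ ↦ (hconst c hc ψ hψ).trans hχc
  refine (Subgroup.relIndex_dvd_of_le_left C hker).trans ?_
  rw [Subgroup.inf_relIndex_right, Subgroup.relIndex_ker]
  have : Finite (C.map (χ.comp ι)) := inferInstanceAs (Finite (χ.comp ι '' C))
  refine card_dvd_of_forall_pow_eq_one _ ?_
  rintro _ ⟨c, hc, rfl⟩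
  exact hpow c hc

variable [IsMulCommutative A]

lemma normalRankLE_commonKer_orbit_two (hG : IsPGroup p G) {χ : A →* Rˣ}
    (hχ : (MulAction.orbit G χ).ncard = p) :
    NormalRankLE A (commonKer (MulAction.orbit G χ)) 2 := by
  classical
  have := hG.isNilpotent
  have hfin : (MulAction.orbit G χ).Finite :=
    Set.finite_of_ncard_pos (hχ ▸ (Fact.out : p.Prime).pos)
  have := hfin.fintype
  obtain ⟨σ, hσ⟩ := exists_orbit_zpowers_eq_of_ncard_orbit_eq_prime hG hχ
  set ν := ∏ ψ : MulAction.orbit G χ, (ψ : A →* Rˣ)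
  have hnormal : (commonKer (MulAction.orbit G χ)).Normal :=
    commonKer_normal_of_stable fun g ψ ↦ MulAction.mem_orbit_of_mem_orbit g
  have hνnormal : (commonKer {ν}).Normal := commonKer_normal_of_stable fun g ψ hψ ↦ by
    rw [hψ, smul_prod_orbit, Set.mem_singleton_iff]
  refine ((normalRankLE_commonKer_singleton ν).inf
    (NormalRankLE.one_of_exists_mem fun N hN hle ↦ ?_)).mono_right inf_le_right
  have hNcomm : IsMulCommutative N :=
    ⟨⟨fun x y ↦ Subtype.ext (setLike_mul_comm (hle x.2).1 (hle y.2).1)⟩⟩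
  refine exists_mem_le_normalClosure_sup (p := p) σ ?_
  rw [← hχ, ← Nat.card_coe_set_eq]
  exact relIndex_comap_commutatorHom_dvd_card
    (fun g ψ ↦ MulAction.mem_orbit_of_mem_orbit g) hσ hle

lemma exists_normalRankLE_orbit (hp : p ≠ 2) (hG : IsPGroup p G) (χ : A →* Rˣ)
    (hχ : (MulAction.orbit G χ).ncard < p ^ 2) :
    ∃ a b, a + b ≤ (MulAction.orbit G χ).ncard ∧
      NormalRankLE ⊤ (fixingSubgroup G (MulAction.orbit G χ)) a ∧
      NormalRankLE A (commonKer (MulAction.orbit G χ)) b := by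
  have hprime : p.Prime := Fact.out
  have : Finite (MulAction.orbit G χ) := Set.finite_range _
  obtain ⟨k, hk⟩ := hG.card_orbit χ
  rw [Nat.card_coe_set_eq] at hk
  have hindex : (MulAction.stabilizer G χ).index = p ^ k := by rw [MulAction.index_stabilizer, hk]
  have hk2 : k < 2 := by rwa [hk, Nat.pow_lt_pow_iff_right hprime.one_lt] at hχ
  obtain rfl | rfl : k = 0 ∨ k = 1 := by omega
  · rw [pow_zero] at hk hindex
    have htop : MulAction.stabilizer G χ = ⊤ := Subgroup.index_eq_one.mp hindex
    have hnormal : (MulAction.stabilizer G χ).Normal := htop ▸ inferInstance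
    have horbit : MulAction.orbit G χ = {χ} := by
      obtain ⟨ψ, hψ⟩ := Set.ncard_eq_one.mp hk
      have hχψ : χ ∈ ({ψ} : Set (A →* Rˣ)) := hψ ▸ MulAction.mem_orbit_self χ
      rw [hψ, Set.mem_singleton_iff.mp hχψ]
    refine ⟨0, 1, hk.ge, .of_le (htop ▸ stabilizer_le_fixingSubgroup_orbit), ?_⟩
    exact horbit ▸ normalRankLE_commonKer_singleton χ
  · rw [pow_one] at hk hindex
    have hnormal : (MulAction.stabilizer G χ).Normal := normal_of_index_eq_prime hG hindex
    have hle : 1 + 2 ≤ p := by have := hprime.two_le; omega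
    refine ⟨1, 2, hk ▸ hle, ?_, normalRankLE_commonKer_orbit_two hG hk⟩
    exact (NormalRankLE.one_of_index_prime (hindex ▸ hprime)).mono_right
      stabilizer_le_fixingSubgroup_orbit

lemma exists_normalRankLE_of_stable (hp : p ≠ 2) (hG : IsPGroup p G) {Ω : Set (A →* Rˣ)}
    (hfin : Ω.Finite) (hΩ : ∀ g : G, ∀ χ ∈ Ω, g • χ ∈ Ω) (hcard : Ω.ncard < p ^ 2) :
    ∃ a b, a + b ≤ Ω.ncard ∧ NormalRankLE ⊤ (fixingSubgroup G Ω) a ∧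
      NormalRankLE A (commonKer Ω) b := by
  induction h : Ω.ncard using Nat.strong_induction_on generalizing Ω with
  | _ n ih =>
  obtain rfl | ⟨χ, hχ⟩ := Ω.eq_empty_or_nonempty
  · exact ⟨0, 0, by simp, .of_le (fixingSubgroup_empty G _).ge, .of_le commonKer_empty.ge⟩
  set O := MulAction.orbit G χ
  have hOΩ : O ⊆ Ω := Set.range_subset_iff.mpr fun g ↦ hΩ g χ hχ
  have hO (g : G) (ψ) (hψ : ψ ∈ O) : g • ψ ∈ O := MulAction.mem_orbit_of_mem_orbit g hψ
  have hdiff (g : G) (ψ) (hψ : ψ ∈ Ω \ O) : g • ψ ∈ Ω \ O :=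
    ⟨hΩ g ψ hψ.1, fun hgψ ↦ hψ.2 (inv_smul_smul g ψ ▸ hO g⁻¹ _ hgψ)⟩
  have hadd := Set.ncard_sdiff_add_ncard_of_subset hOΩ hfin
  have hpos : 0 < O.ncard :=
    (Set.ncard_pos (hfin.subset hOΩ)).mpr ⟨χ, MulAction.mem_orbit_self χ⟩
  obtain ⟨a, b, hab, ha, hb⟩ := exists_normalRankLE_orbit hp hG χ (show O.ncard < p ^ 2 by omega)
  change a + b ≤ O.ncard at hab
  obtain ⟨a', b', hab', ha', hb'⟩ := ih (Ω \ O).ncard (by omega) hfin.sdiff hdiff (by omega) rfl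
  have := fixingSubgroup_normal_of_stable hO
  have := commonKer_normal_of_stable hO
  refine ⟨a + a', b + b', by omega, ?_, ?_⟩
  · rw [← Set.union_sdiff_cancel hOΩ, fixingSubgroup_union]
    exact ha.inf (ha'.mono_left le_top)
  · rw [← Set.union_sdiff_cancel hOΩ, commonKer_union]
    exact hb.inf (hb'.mono_left inf_le_left)

theorem generatedByAtMost_ncard_of_commonKer_eq_bot (hp : p ≠ 2) (hG : IsPGroup p G)
    (hA : Subgroup.centralizer (A : Set G) ≤ A) {Ω : Set (A →* Rˣ)} (hfin : Ω.Finite)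
    (hΩ : ∀ g : G, ∀ χ ∈ Ω, g • χ ∈ Ω) (hker : commonKer Ω = ⊥) (hcard : Ω.ncard < p ^ 2) :
    GeneratedByAtMost G Ω.ncard := by
  have := hG.isNilpotent
  obtain ⟨a, b, hab, ha, hb⟩ := exists_normalRankLE_of_stable hp hG hfin hΩ hcard
  have hG_rank : NormalRankLE (⊤ : Subgroup G) (A ⊓ commonKer Ω) (a + b) :=
    (ha.mono_right ((fixingSubgroup_le_centralizer hker).trans hA)).inf
      (hb.mono_left inf_le_right)
  exact (hG_rank.mono_right (inf_le_right.trans_eq hker)).generatedByAtMost.mono hab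

end ConjugateCharacters

section Weights

variable {A K V : Type*} [Group A] [Field K] [AddCommGroup V] [Module K V]

/-- The weights of a representation: the characters by which the group acts on some nonzero
vector. -/
def weights (ρ : A →* Module.End K V) : Set (A →* Kˣ) :=
  {χ | ∃ v : V, v ≠ 0 ∧ ∀ a, ρ a v = (χ a : K) • v}

variable (ρ : A →* Module.End K V)

lemma commute_of_isMulCommutative [IsMulCommutative A] (a b : A) : Commute (ρ a) (ρ b) := by
  rw [Commute, SemiconjBy, ← map_mul, ← map_mul, mul_comm']

lemma exists_monoidHom_units_eq {f : A → K} {v : V} (hv : v ≠ 0) (h : ∀ a, ρ a v = f a • v) :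
    ∃ χ : A →* Kˣ, ∀ a, (χ a : K) = f a := by
  let φ : A →* K :=
    { toFun := f
      map_one' := smul_left_injective K hv (by simp [← h])
      map_mul' := fun a b ↦ smul_left_injective K hv (by
        simp only [← h, map_mul, Module.End.mul_apply, mul_smul]
        rw [h b, map_smul, h a, smul_comm]) }
  exact ⟨φ.toHomUnits, fun a ↦ rfl⟩

variable [NeZero (Nat.card A : K)] [FiniteDimensional K V]

lemma isFinitelySemisimple_of_neZero_card (a : A) : (ρ a).IsFinitelySemisimple := by
  rw [Module.End.isFinitelySemisimple_iff_isSemisimple]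
  refine Module.End.isSemisimple_of_squarefree_aeval_eq_zero
    (p := Polynomial.X ^ Nat.card A - 1) ?_ ?_
  · exact (Polynomial.X_pow_sub_one_separable_iff.mpr (NeZero.ne _)).squarefree
  · rw [map_sub, map_pow, Polynomial.aeval_X, map_one, ← map_pow, pow_card_eq_one', map_one,
      sub_self]

lemma mem_iInf_maxGenEigenspace_iff {f : A → K} {v : V} :
    v ∈ ⨅ a, (ρ a).maxGenEigenspace (f a) ↔ ∀ a, ρ a v = f a • v := by
  simp only [Submodule.mem_iInf, Module.End.mem_eigenspace_iff,
    (isFinitelySemisimple_of_neZero_card ρ _).maxGenEigenspace_eq_eigenspace]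

variable [IsMulCommutative A]

lemma weights_finite_and_ncard_le_finrank :
    (weights ρ).Finite ∧ (weights ρ).ncard ≤ Module.finrank K V := by
  let E (χ : A →* Kˣ) : Submodule K V := ⨅ a, (ρ a).maxGenEigenspace (χ a : K)
  have hind : iSupIndep E :=
    (Module.End.independent_iInf_maxGenEigenspace_of_forall_mapsTo (fun a ↦ ρ a)
      fun a b μ ↦ Module.End.mapsTo_maxGenEigenspace_of_comm
        (commute_of_isMulCommutative ρ b a) μ).comp
      (f := fun (χ : A →* Kˣ) a ↦ (χ a : K))
      fun χ ψ h ↦ MonoidHom.ext fun a ↦ Units.ext (congrFun h a)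
  have hE : weights ρ = {χ | E χ ≠ ⊥} := by
    ext χ
    simp only [weights, Set.mem_ofPred_eq, Submodule.ne_bot_iff, E, mem_iInf_maxGenEigenspace_iff]
    exact exists_congr fun v ↦ and_comm
  have hfin : Fintype {χ // E χ ≠ ⊥} := hind.fintypeNeBotOfFiniteDimensional
  rw [hE, ← Nat.card_coe_set_eq]
  exact ⟨Set.finite_coe_iff.mp hfin.finite,
    (Nat.card_eq_fintype_card (α := {χ // E χ ≠ ⊥})).trans_le hind.subtype_ne_bot_le_finrank⟩

lemma eq_one_of_forall_weights [IsAlgClosed K] {a : A} (ha : ∀ χ ∈ weights ρ, χ a = 1) :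
    ρ a = 1 := by
  have htop : ⨆ f : A → K, ⨅ a, (ρ a).maxGenEigenspace (f a) = ⊤ :=
    Module.End.iSup_iInf_maxGenEigenspace_eq_top_of_iSup_maxGenEigenspace_eq_top_of_commute
      (fun a ↦ ρ a) (fun a b _ ↦ commute_of_isMulCommutative ρ a b)
      fun a ↦ Module.End.iSup_maxGenEigenspace_eq_top (ρ a)
  suffices hle : (⊤ : Submodule K V) ≤ LinearMap.eqLocus (ρ a) 1 from
    LinearMap.ext fun v ↦ hle trivial
  refine htop.symm.trans_le (iSup_le fun f v hv ↦ ?_)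
  rw [mem_iInf_maxGenEigenspace_iff] at hv
  obtain rfl | hv0 := eq_or_ne v 0
  · exact zero_mem _
  obtain ⟨χ, hχ⟩ := exists_monoidHom_units_eq ρ hv0 hv
  have hχa : χ a = 1 := ha χ ⟨v, hv0, fun b ↦ by rw [hχ, hv]⟩
  rw [LinearMap.mem_eqLocus, hv, ← hχ, hχa, Units.val_one, one_smul, Module.End.one_apply]

end Weights

section FaithfulRepresentations

variable {G K V : Type*} [Group G] [Field K] [AddCommGroup V] [Module K V]

attribute [local instance] conjCharacterAction

lemma smul_mem_weights {A : Subgroup G} [A.Normal] (θ : G →* Module.End K V) (g : G)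
    {χ : A →* Kˣ} (hχ : χ ∈ weights (θ.comp A.subtype)) :
    g • χ ∈ weights (θ.comp A.subtype) := by
  obtain ⟨v, hv, hχ⟩ := hχ
  have hinv : θ g⁻¹ (θ g v) = v := by
    rw [← Module.End.mul_apply, ← map_mul, inv_mul_cancel, map_one, Module.End.one_apply]
  refine ⟨θ g v, fun h ↦ hv (by rw [← hinv, h, map_zero]), fun a ↦ ?_⟩
  have hcomm : (a : G) * g = g * (MulAut.conjNormal g⁻¹ a : A) := by simp [mul_assoc]
  rw [conjCharacter_smul_apply, ← map_smul, ← hχ, MonoidHom.comp_apply, MonoidHom.comp_apply,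
    Subgroup.subtype_apply, Subgroup.subtype_apply, ← Module.End.mul_apply,
    ← Module.End.mul_apply, ← map_mul, ← map_mul, hcomm]

variable [FiniteDimensional K V] [IsAlgClosed K]

lemma commonKer_weights_eq_bot {A : Subgroup G} [IsMulCommutative A]
    [NeZero (Nat.card A : K)] {θ : G →* Module.End K V} (hθ : Function.Injective θ) :
    commonKer (weights (θ.comp A.subtype)) = ⊥ := by
  rw [eq_bot_iff]
  intro a ha
  lift a to A using commonKer_le _ ha
  have h := eq_one_of_forall_weights _ (coe_mem_commonKer.mp ha)
  exact hθ (h.trans (map_one θ).symm)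

theorem generatedByAtMost_finrank_of_injective [Finite G] {p : ℕ} [Fact p.Prime] [NeZero (p : K)]
    (hp : p ≠ 2) (hG : IsPGroup p G) {θ : G →* Module.End K V} (hθ : Function.Injective θ)
    (hV : Module.finrank K V < p ^ 2) :
    GeneratedByAtMost G (Module.finrank K V) := by
  have := hG.isNilpotent
  obtain ⟨A, hA, hAcomm, hAcent⟩ := exists_normal_isMulCommutative_centralizer_le G
  have hcard : NeZero (Nat.card A : K) := by
    obtain ⟨k, hk⟩ := IsPGroup.iff_card.mp (hG.to_subgroup A)
    rw [hk, Nat.cast_pow]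
    infer_instance
  obtain ⟨hfin, hle⟩ := weights_finite_and_ncard_le_finrank (θ.comp A.subtype)
  exact (generatedByAtMost_ncard_of_commonKer_eq_bot hp hG hAcent hfin
    (fun g χ ↦ smul_mem_weights θ g) (commonKer_weights_eq_bot hθ) (hle.trans_lt hV)).mono hle

end FaithfulRepresentations

theorem stmt_9_general {p : ℕ} [Fact p.Prime] (hp : p ≠ 2) {K ι : Type*} [Field K]
    [NeZero (p : K)] [Fintype ι] [DecidableEq ι] (hι : Fintype.card ι < p ^ 2)
    (G : Subgroup (GL ι K)) [Finite G] (hG : IsPGroup p G) :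
    GeneratedByAtMost G (Fintype.card ι) := by
  let L := AlgebraicClosure K
  let θ : G →* Module.End L (ι → L) :=
    (Matrix.toLinAlgEquiv' : Matrix ι ι L ≃ₐ[L] _).toAlgHom.toMonoidHom.comp <|
      (algebraMap K L).mapMatrix.toMonoidHom.comp <| (Units.coeHom _).comp G.subtype
  have hθ : Function.Injective θ :=
    Matrix.toLinAlgEquiv'.injective.comp <|
      (Matrix.map_injective (algebraMap K L).injective).comp <|
        Units.val_injective.comp G.subtype_injective
  have : NeZero (p : L) := NeZero.nat_of_injective (algebraMap K L).injective
  rw [← Module.finrank_fintype_fun_eq_card L] at hι ⊢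
  exact generatedByAtMost_finrank_of_injective hp hG hθ hι

theorem stmt_9 (n : ℕ) (h₁ : 3 < n) (h₂ : n < 9)
    (G : Subgroup (GL (Fin n) ℂ)) [Finite G] (hG : IsPGroup 3 G) :
    GeneratedByAtMost G n := by
  have : Fact (Nat.Prime 3) := ⟨Nat.prime_three⟩
  simpa using stmt_9_general (by decide) (by simpa using h₂) G hG
end

section
/- Let n be an integer with 3 < n < 9. Then every finite 3-subgroup of PGLₙ(ℂ) can be generated by n − 1 elements. -/
open Matrix

/-!
Lift `G` to a finite `p`-subgroup of `SLₙ(K)`. By induction on `dim V`, a finite `p`-group `G`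
acting on `V` is generated by the elements acting as scalars together with `dim V - 1` others.

It suffices to find `W ≠ 0` such that `G` is generated by `scalarOn ρ W` and `dim W - 1` elements:
twisted by a character, `scalarOn ρ W` acts trivially on `W`, and those of its elements that then
also act trivially on `V ⧸ W` are scalars on `V`, their order being invertible in `K`. So induction
on `V ⧸ W` supplies the missing `dim V - dim W` generators.

If `G` does not act by scalars, let `z` be a non-scalar element that is central modulo scalars, with
`z ^ p` scalar, and let `E` be an eigenspace of `z`. The group `G` permutes the eigenspaces of `z`
by multiplying the eigenvalues by a character `ζ` with `ζ ^ p = 1`; let `H` be its kernel, which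
stabilises `E`. If `H = G`, take `W = E`. Otherwise take for `W` the direct sum of the translates
`gⁱE`, `i < p`, for some `g ∉ H`. One generator reaches `H`, and `p (dim E - 1)` more reach the
subgroup `A` acting by a scalar on each `gⁱE`. Conjugation by `g` permutes the resulting `p`
characters of `A` cyclically, so the coinvariants of `g` on `A ⧸ (A ∩ scalarOn ρ W)` are cyclic,
and commutators can be dropped from generating sets of a `p`-group. In total
`p (dim E - 1) + 2 ≤ p dim E - 1`, because `p ≥ 3`.
-/

open scoped commutatorElement

section Generation

variable {G G' : Type*} [Group G] [Group G']

/-- The subgroup `H` is generated by `N` together with at most `m` further elements. For `N` normal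
in `H` this says that `H ⧸ N` has a generating set of at most `m` elements. -/
def GeneratedOver (N H : Subgroup G) (m : ℕ) : Prop :=
  ∃ S : Finset G, S.card ≤ m ∧ Subgroup.closure (S : Set G) ⊔ N = H

namespace GeneratedOver

variable {N N' H K : Subgroup G} {m m' : ℕ}

theorem self (H : Subgroup G) (m : ℕ) : GeneratedOver H H m :=
  ⟨∅, by simp, by simp⟩

theorem zpowers_sup (g : G) (N : Subgroup G) : GeneratedOver N (Subgroup.zpowers g ⊔ N) 1 :=
  ⟨{g}, by simp, by rw [Finset.coe_singleton, Subgroup.zpowers_eq_closure]⟩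

theorem mono_card (h : GeneratedOver N H m) (hm : m ≤ m') : GeneratedOver N H m' :=
  let ⟨S, hcard, hS⟩ := h
  ⟨S, hcard.trans hm, hS⟩

theorem mono (h : GeneratedOver N H m) (hN : N ≤ N') (hH : N' ≤ H) : GeneratedOver N' H m := by
  obtain ⟨S, hcard, rfl⟩ := h
  refine ⟨S, hcard, le_antisymm (sup_le le_sup_left hH) (sup_le_sup_left hN _)⟩

theorem trans (hNH : GeneratedOver N H m) (hHK : GeneratedOver H K m') :
    GeneratedOver N K (m + m') := by
  classical
  obtain ⟨S, hScard, rfl⟩ := hNH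
  obtain ⟨T, hTcard, rfl⟩ := hHK
  refine ⟨S ∪ T, (Finset.card_union_le S T).trans (add_le_add hScard hTcard), ?_⟩
  rw [Finset.coe_union, Subgroup.closure_union, ← sup_assoc, sup_comm (Subgroup.closure _)]

theorem map (h : GeneratedOver N H m) (f : G →* G') : GeneratedOver (N.map f) (H.map f) m := by
  classical
  obtain ⟨S, hcard, rfl⟩ := h
  refine ⟨S.image f, Finset.card_image_le.trans hcard, ?_⟩
  rw [Finset.coe_image, ← MonoidHom.map_closure, Subgroup.map_sup]

theorem of_subgroupOf (h : GeneratedOver (N.subgroupOf H) ⊤ m) : GeneratedOver (N ⊓ H) H m := by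
  simpa [Subgroup.subgroupOf_map_subtype, ← MonoidHom.range_eq_map] using h.map H.subtype

theorem iInf_inf {ι : Type*} (s : Finset ι) {A : ι → Subgroup G}
    (h : ∀ i ∈ s, ∀ L ≤ H, GeneratedOver (A i ⊓ L) L m) :
    GeneratedOver ((⨅ i ∈ s, A i) ⊓ H) H (s.card * m) := by
  classical
  induction s using Finset.induction_on with
  | empty => simpa using self H 0
  | insert i s hi ih =>
    rw [Finset.iInf_insert, inf_assoc, Finset.card_insert_of_notMem hi, add_one_mul, add_comm]
    exact (h i (Finset.mem_insert_self i s) _ inf_le_right).trans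
      (ih fun j hj => h j (Finset.mem_insert_of_mem hj))

end GeneratedOver

theorem exists_zpowers_sup_ker_eq_top (f : G →* G') [IsCyclic f.range] :
    ∃ g : G, Subgroup.zpowers g ⊔ f.ker = ⊤ := by
  obtain ⟨⟨_, g, rfl⟩, hg⟩ := IsCyclic.exists_generator (α := f.range)
  refine ⟨g, ?_⟩
  rw [← Subgroup.comap_map_eq, MonoidHom.map_zpowers, eq_top_iff]
  rintro x -
  obtain ⟨k, hk⟩ := hg ⟨f x, x, rfl⟩
  exact ⟨k, congrArg Subtype.val hk⟩

theorem generatedOver_ker_of_isCyclic (f : G →* G') [IsCyclic f.range] : GeneratedOver f.ker ⊤ 1 :=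
  let ⟨g, hg⟩ := exists_zpowers_sup_ker_eq_top f
  hg ▸ .zpowers_sup g f.ker

theorem exists_notMem_forall_commutator_mem {p : ℕ} [Fact p.Prime] [Finite G] (hG : IsPGroup p G)
    (N : Subgroup G) [N.Normal] (hN : N ≠ ⊤) :
    ∃ z ∉ N, z ^ p ∈ N ∧ ∀ g : G, ⁅g, z⁆ ∈ N := by
  have : Nontrivial (G ⧸ N) := QuotientGroup.nontrivial_iff.2 hN
  have hcenter := (hG.to_quotient N).center_nontrivial
  obtain ⟨k, hk0, hk⟩ :=
    ((hG.to_quotient N).to_subgroup (Subgroup.center (G ⧸ N))).nontrivial_iff_card.1 hcenter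
  obtain ⟨⟨z, hz⟩, hzp⟩ :=
    exists_prime_orderOf_dvd_card' p (hk ▸ dvd_pow_self p hk0.ne')
  obtain ⟨z, rfl⟩ := QuotientGroup.mk_surjective z
  rw [Subgroup.orderOf_mk] at hzp
  refine ⟨z, fun hzN => ?_, ?_, fun g => ?_⟩
  · rw [(QuotientGroup.eq_one_iff z).2 hzN, orderOf_one] at hzp
    exact (Fact.out : p.Prime).one_lt.ne hzp
  · rw [← QuotientGroup.eq_one_iff, QuotientGroup.mk_pow, ← hzp, pow_orderOf_eq_one]
  · rw [← QuotientGroup.eq_one_iff]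
    exact commutatorElement_eq_one_iff_mul_comm.2 (Subgroup.mem_center_iff.1 hz g)

theorem commutator_le_of_isCoatom [Group.IsNilpotent G] {M : Subgroup G} (hM : IsCoatom M) :
    commutator G ≤ M := by
  have : M.Normal := Subgroup.NormalizerCondition.normal_of_coatom M
    Group.normalizerCondition_of_isNilpotent hM
  have : Nontrivial (G ⧸ M) := QuotientGroup.nontrivial_iff.2 hM.1
  have hlt : (⊥ : Subgroup (G ⧸ M)).comap (QuotientGroup.mk' M) <
      (Subgroup.center (G ⧸ M)).comap (QuotientGroup.mk' M) :=
    (Subgroup.comap_lt_comap_of_surjective (QuotientGroup.mk'_surjective M)).2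
      (Group.IsNilpotent.center_ne_bot (G ⧸ M)).bot_lt
  rw [MonoidHom.comap_bot, QuotientGroup.ker_mk'] at hlt
  rw [← Subgroup.Normal.quotient_commutative_iff_commutator_le, ← Subgroup.center_eq_top_iff]
  exact Subgroup.comap_injective (QuotientGroup.mk'_surjective M) (hM.2 _ hlt)

theorem commutator_le_frattini [Group.IsNilpotent G] : commutator G ≤ frattini G :=
  le_iInf₂ fun _ => commutator_le_of_isCoatom

theorem GeneratedOver.of_sup_commutator [Finite G] [Group.IsNilpotent G] {N : Subgroup G} {m : ℕ}
    (h : GeneratedOver (N ⊔ commutator G) ⊤ m) : GeneratedOver N ⊤ m := by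
  obtain ⟨S, hcard, hS⟩ := h
  refine ⟨S, hcard, frattini_nongenerating ?_⟩
  rw [eq_top_iff, ← hS, ← sup_assoc]
  exact sup_le_sup_left commutator_le_frattini _

end Generation

section Coinvariants

/-- The homomorphism sending a sequence `x` to its ratios `x (i + 1) / x i`. -/
def consecutiveRatio (M : Type*) [CommGroup M] : (ℕ → M) →* (ℕ → M) where
  toFun x i := x (i + 1) / x i
  map_one' := funext fun _ => div_self' 1
  map_mul' x y := funext fun i => mul_div_mul_comm (x (i + 1)) (y (i + 1)) (x i) (y i)

theorem eq_apply_zero_of_consecutiveRatio_eq_one {M : Type*} [CommGroup M] {x : ℕ → M}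
    (hx : consecutiveRatio M x = 1) (i : ℕ) : x i = x 0 := by
  induction i with
  | zero => rfl
  | succ i ih => exact (div_eq_one.1 (congrFun hx i)).trans ih

variable {R : Type*} [CommRing R] [IsDomain R] {p : ℕ}

theorem card_dvd_of_consecutiveRatio_eq_one [NeZero p] (B : Subgroup (ℕ → Rˣ))
    (hconst : ∀ x ∈ B, consecutiveRatio Rˣ x = 1)
    (hprod : ∀ x ∈ B, ∏ i ∈ Finset.range p, x i = 1) : Nat.card B ∣ p := by
  have hconst' : ∀ x ∈ B, ∀ i, x i = x 0 := fun x hx =>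
    eq_apply_zero_of_consecutiveRatio_eq_one (hconst x hx)
  have hpow : ∀ x ∈ B, x 0 ^ p = 1 := fun x hx => by
    rw [← hprod x hx, Finset.prod_congr rfl fun i _ => hconst' x hx i, Finset.prod_const,
      Finset.card_range]
  let f : B →* rootsOfUnity p R :=
    ((Pi.evalMonoidHom (fun _ => Rˣ) 0).comp B.subtype).codRestrict _ fun x => hpow x x.2
  have hf : Function.Injective f := (injective_iff_map_eq_one f).2 fun x hx =>
    Subtype.ext <| funext fun i => (hconst' x x.2 i).trans (congrArg Subtype.val hx)
  refine (Subgroup.card_dvd_of_injective f hf).trans ?_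
  rw [← IsCyclic.exponent_eq_card]
  exact Monoid.exponent_dvd_of_forall_pow_eq_one fun ζ => Subtype.ext ζ.2

-- The cokernel of `δ` has the order of its kernel, which embeds in the `p`-th roots of unity.
theorem isCyclic_quotient_range_of_consecutiveRatio [Fact p.Prime] (B : Subgroup (ℕ → Rˣ))
    [Finite B] (hprod : ∀ x ∈ B, ∏ i ∈ Finset.range p, x i = 1) (δ : B →* B)
    (hδ : ∀ x, (δ x : ℕ → Rˣ) = consecutiveRatio Rˣ x) : IsCyclic (B ⧸ δ.range) := by
  refine isCyclic_of_card_dvd_prime (p := p) ?_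
  rw [← Subgroup.index, Subgroup.index_range,
    ← Subgroup.card_map_of_injective (K := δ.ker) B.subtype_injective]
  refine card_dvd_of_consecutiveRatio_eq_one _ ?_ ?_
  · rintro _ ⟨x, hx, rfl⟩
    exact (hδ x).symm.trans (congrArg Subtype.val hx)
  · rintro _ ⟨x, -, rfl⟩
    exact hprod x x.2

theorem generatedOver_coinvariants {A : Type*} [Group A] [Finite A] [Fact p.Prime]
    (a : ℕ → A →* Rˣ) (φ : A → A) (hφ : ∀ i y, a i (φ y) = a (i + 1) y) (hp : a p = a 0) :
    GeneratedOver (Subgroup.closure (Set.range fun y => φ y * y⁻¹) ⊔ ⨅ i, (a i).eqLocus (a 0))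
      ⊤ 1 := by
  let b : A →* (ℕ → Rˣ) := (consecutiveRatio Rˣ).comp (MonoidHom.pi a)
  have hbφ (y : A) (i : ℕ) : b (φ y) i = b y (i + 1) := congrArg₂ (· / ·) (hφ (i + 1) y) (hφ i y)
  have hratio (y : A) : consecutiveRatio Rˣ (b y) = b (φ y * y⁻¹) := by
    rw [map_mul, map_inv, ← div_eq_mul_inv]
    exact funext fun i => congrArg (· / b y i) (hbφ y i).symm
  have hprod : ∀ x ∈ b.range, ∏ i ∈ Finset.range p, x i = 1 := by
    rintro _ ⟨y, rfl⟩
    exact (Finset.prod_range_div (fun i => a i y) p).trans (by rw [hp, div_self'])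
  let δ : b.range →* b.range := ((consecutiveRatio Rˣ).comp b.range.subtype).codRestrict _ <| by
    rintro ⟨_, y, rfl⟩
    exact ⟨_, (hratio y).symm⟩
  have : Finite b.range := .of_surjective _ b.rangeRestrict_surjective
  have := isCyclic_quotient_range_of_consecutiveRatio b.range hprod δ fun _ => rfl
  refine (generatedOver_ker_of_isCyclic ((QuotientGroup.mk' δ.range).comp b.rangeRestrict)).mono
    ?_ le_top
  intro y hy
  obtain ⟨⟨_, x, rfl⟩, hx⟩ := (QuotientGroup.eq_one_iff _).1 (MonoidHom.mem_ker.1 hy)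
  have hbx : b (φ x * x⁻¹) = b y := (hratio x).symm.trans (congrArg Subtype.val hx)
  rw [← mul_inv_cancel_left (φ x * x⁻¹) y]
  refine Subgroup.mul_mem_sup (Subgroup.subset_closure ⟨x, rfl⟩) (Subgroup.mem_iInf.2 fun i => ?_)
  refine eq_apply_zero_of_consecutiveRatio_eq_one (x := fun i => a i _) ?_ i
  change b _ = 1
  rw [map_mul, map_inv, hbx, inv_mul_cancel]

end Coinvariants

section Scalars

variable {K G V : Type*} [Field K] [Group G] [AddCommGroup V] [Module K V]
  (ρ : Representation K G V)

/-- The subgroup of the elements acting on the subspace `W` as a scalar. In a projective setting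
`scalarOn ρ ⊤` is the kernel of the action on the projective space of `V`. -/
def scalarOn (W : Submodule K V) : Subgroup G where
  carrier := {g | ∃ c : Kˣ, ∀ w ∈ W, ρ g w = c • w}
  one_mem' := ⟨1, fun w _ => by simp⟩
  mul_mem' := by
    rintro g h ⟨c, hc⟩ ⟨d, hd⟩
    refine ⟨c * d, fun w hw => ?_⟩
    rw [map_mul, Module.End.mul_apply, hd w hw, LinearMap.map_smul_of_tower, hc w hw,
      smul_smul, mul_comm]
  inv_mem' := by
    rintro g ⟨c, hc⟩
    refine ⟨c⁻¹, fun w hw => ?_⟩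
    rw [Representation.inv_apply_eq_iff, LinearMap.map_smul_of_tower, hc w hw, inv_smul_smul]

variable {ρ}

theorem scalarOn_anti {W W' : Submodule K V} (h : W ≤ W') : scalarOn ρ W' ≤ scalarOn ρ W :=
  fun _ ⟨c, hc⟩ => ⟨c, fun w hw => hc w (h hw)⟩

theorem mem_scalarOn_iSup {ι : Type*} {U : ι → Submodule K V} {g : G} {c : Kˣ}
    (h : ∀ i, ∀ w ∈ U i, ρ g w = c • w) : g ∈ scalarOn ρ (⨆ i, U i) :=
  have hle : ⨆ i, U i ≤ Module.End.eigenspace (ρ g) (c : K) :=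
    iSup_le fun i w hw => Module.End.mem_eigenspace_iff.2 (h i w hw)
  ⟨c, fun _ hw => Module.End.mem_eigenspace_iff.1 (hle hw)⟩

theorem apply_inv_mul_mul_eq_smul_iff {g h : G} {c : Kˣ} {w : V} :
    ρ (g⁻¹ * h * g) w = c • w ↔ ρ h (ρ g w) = c • ρ g w := by
  rw [map_mul, map_mul, Module.End.mul_apply, Module.End.mul_apply,
    Representation.inv_apply_eq_iff, LinearMap.map_smul_of_tower]

theorem inv_mul_mul_mem_scalarOn_iff {W : Submodule K V} {g h : G} :
    g⁻¹ * h * g ∈ scalarOn ρ W ↔ h ∈ scalarOn ρ (W.map (ρ g)) := by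
  refine exists_congr fun c => ?_
  simp only [apply_inv_mul_mul_eq_smul_iff, Submodule.mem_map, forall_exists_index, and_imp,
    forall_apply_eq_imp_iff₂]

instance : (scalarOn ρ (⊤ : Submodule K V)).Normal where
  conj_mem h hh g := by
    rw [← inv_inv g, inv_inv g⁻¹, inv_mul_mul_mem_scalarOn_iff]
    exact scalarOn_anti le_top hh

theorem units_smul_left_injective {v : V} (hv : v ≠ 0) : Function.Injective fun c : Kˣ => c • v :=
  fun _ _ h => Units.ext (smul_left_injective K hv h)

theorem exists_character {v : V} (hv : v ≠ 0) (h : ∀ g, ∃ c : Kˣ, ρ g v = c • v) :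
    ∃ χ : G →* Kˣ, ∀ g, ρ g v = χ g • v := by
  choose c hc using h
  refine ⟨.mk' c fun g h => units_smul_left_injective hv ?_, hc⟩
  change c (g * h) • v = (c g * c h) • v
  rw [← hc, map_mul, Module.End.mul_apply, hc h, LinearMap.map_smul_of_tower, hc g, smul_smul,
    mul_comm]

theorem exists_character_scalarOn {W : Submodule K V} (hW : W ≠ ⊥) :
    ∃ χ : scalarOn ρ W →* Kˣ, ∀ g : scalarOn ρ W, ∀ w ∈ W, ρ g w = χ g • w := by
  obtain ⟨v, hvW, hv⟩ := W.exists_mem_ne_zero_of_ne_bot hW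
  obtain ⟨χ, hχ⟩ := exists_character (ρ := ρ.comp (scalarOn ρ W).subtype) hv
    fun g => g.2.imp fun _ hc => hc v hvW
  refine ⟨χ, fun g w hw => ?_⟩
  obtain ⟨c, hc⟩ := g.2
  have hcχ : c = χ g := units_smul_left_injective hv ((hc v hvW).symm.trans (hχ g))
  rw [hc w hw, hcχ]

theorem generatedOver_ker_scalarOn_top [Finite G] [Nontrivial V] :
    GeneratedOver ρ.ker (scalarOn ρ ⊤) 1 := by
  obtain ⟨χ, hχ⟩ := exists_character_scalarOn (ρ := ρ) top_ne_bot
  have : Finite χ.range := .of_surjective _ χ.rangeRestrict_surjective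
  have hle : ρ.ker ≤ scalarOn ρ ⊤ := fun g hg => ⟨1, fun w _ => by simp [MonoidHom.mem_ker.1 hg]⟩
  have hker : χ.ker ≤ ρ.ker.subgroupOf (scalarOn ρ ⊤) := fun g hg => LinearMap.ext fun w => by
    rw [Subgroup.subtype_apply, hχ g w trivial, MonoidHom.mem_ker.1 hg, one_smul,
      Module.End.one_apply]
  rw [← inf_eq_left.2 hle]
  exact .of_subgroupOf ((generatedOver_ker_of_isCyclic χ).mono hker le_top)

variable (ρ) in
/-- The representation `g ↦ χ g • ρ g`, i.e. the tensor product of `ρ` with the character `χ`. -/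
def twist (χ : G →* Kˣ) : Representation K G V where
  toFun g := χ g • ρ g
  map_one' := by simp
  map_mul' g h := by rw [map_mul, map_mul, smul_mul_smul_comm]

theorem eq_one_of_pow_eq_one_of_forall_sub_mem {f : Module.End K V} {W : Submodule K V} {m : ℕ}
    (hm : (m : K) ≠ 0) (hf : f ^ m = 1) (hW : ∀ w ∈ W, f w = w) (hVW : ∀ v, f v - v ∈ W) :
    f = 1 := by
  ext v
  have hpow (k : ℕ) : (f ^ k) v = v + (k : K) • (f v - v) := by
    induction k with
    | zero => simp
    | succ k ih =>
      rw [pow_succ', Module.End.mul_apply, ih, map_add, map_smul, hW _ (hVW v), Nat.cast_succ,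
        add_smul, one_smul]
      abel
  have hzero : (m : K) • (f v - v) = 0 := by simpa [hf] using hpow m
  exact sub_eq_zero.1 ((smul_eq_zero.1 hzero).resolve_left hm)

theorem generatedOver_scalarOn_of_quotient (hG : ∀ g : G, (orderOf g : K) ≠ 0)
    {W : Submodule K V} (hW : W ≠ ⊥) {m : ℕ}
    (h : ∀ σ : Representation K (scalarOn ρ W) (V ⧸ W), GeneratedOver σ.ker ⊤ m) :
    GeneratedOver (scalarOn ρ ⊤) (scalarOn ρ W) m := by
  obtain ⟨χ, hχ⟩ := exists_character_scalarOn (ρ := ρ) hW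
  let τ : Representation K (scalarOn ρ W) V := twist (ρ.comp (scalarOn ρ W).subtype) χ⁻¹
  have hτ (g : scalarOn ρ W) (w : V) (hw : w ∈ W) : τ g w = w :=
    (congrArg ((χ g)⁻¹ • ·) (hχ g w hw)).trans (inv_smul_smul _ _)
  let σ : Representation K (scalarOn ρ W) (V ⧸ W) :=
    τ.quotient W fun g w hw => by rwa [Submodule.mem_comap, hτ g w hw]
  have hker : σ.ker ≤ (scalarOn ρ ⊤).subgroupOf (scalarOn ρ W) := by
    intro g hg
    have hpow : τ g ^ orderOf (g : G) = 1 := by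
      rw [← map_pow, Subgroup.orderOf_coe, pow_orderOf_eq_one, map_one]
    have hmod (v : V) : τ g v - v ∈ W :=
      (Submodule.Quotient.eq W).1 (LinearMap.congr_fun (MonoidHom.mem_ker.1 hg) (W.mkQ v))
    have hone : τ g = 1 :=
      eq_one_of_pow_eq_one_of_forall_sub_mem (hG g) hpow (hτ g) hmod
    exact ⟨χ g, fun w _ => inv_smul_eq_iff.1 (LinearMap.congr_fun hone w)⟩
  rw [← inf_eq_left.2 (scalarOn_anti (ρ := ρ) le_top : scalarOn ρ ⊤ ≤ scalarOn ρ W)]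
  exact .of_subgroupOf ((h σ).mono hker le_top)

end Scalars

section Translates

variable {K G V : Type*} [Field K] [Group G] [AddCommGroup V] [Module K V]
  {ρ : Representation K G V} {p : ℕ} {g : G} {E : Submodule K V} {m : ℕ}

theorem generatedOver_scalarOn_map {L : Subgroup G}
    (hL : ∀ h ∈ L, E ≤ E.comap (ρ (g⁻¹ * h * g)))
    (ih : ∀ σ : Representation K L E, GeneratedOver (scalarOn σ ⊤) ⊤ m) :
    GeneratedOver (scalarOn ρ (E.map (ρ g)) ⊓ L) L m := by
  let f : L →* G := (MulAut.conj g⁻¹).toMonoidHom.comp L.subtype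
  have hf (h : L) : f h = g⁻¹ * h * g := by simp [f]
  let σ : Representation K L E := Representation.subrepresentation (ρ.comp f) E fun h => by
    simpa only [MonoidHom.comp_apply, hf] using hL h h.2
  refine .of_subgroupOf ((ih σ).mono ?_ le_top)
  rintro h ⟨c, hc⟩
  refine inv_mul_mul_mem_scalarOn_iff.1 ⟨c, fun w hw => ?_⟩
  rw [Subgroup.subtype_apply, ← hf]
  exact congrArg Subtype.val (hc ⟨w, hw⟩ trivial)

theorem map_translate (i j : ℕ) :
    (E.map (ρ (g ^ j))).map (ρ (g ^ i)) = E.map (ρ (g ^ (i + j))) := by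
  rw [← Submodule.map_comp, ← Module.End.mul_eq_comp, ← map_mul, ← pow_add]

theorem map_eq_of_forall_le_comap {H : Subgroup G} (hH : ∀ h ∈ H, E ≤ E.comap (ρ h)) {h : G}
    (hh : h ∈ H) : E.map (ρ h) = E :=
  le_antisymm (Submodule.map_le_iff_le_comap.2 (hH h hh)) fun w hw =>
    ⟨ρ h⁻¹ w, hH _ (H.inv_mem hh) hw, ρ.self_inv_apply h w⟩

theorem generatedOver_of_le_scalarOn_translates [Finite G] [Fact p.Prime] (hE : E ≠ ⊥)
    (hp : E.map (ρ (g ^ p)) = E) {A : Subgroup G} (hA : ∀ i, A ≤ scalarOn ρ (E.map (ρ (g ^ i))))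
    (hconj : ∀ h ∈ A, g⁻¹ * h * g ∈ A) :
    GeneratedOver ((scalarOn ρ (⨆ i, E.map (ρ (g ^ i))) ⊔ commutator G) ⊓ A) A 1 := by
  obtain ⟨v, hvE, hv⟩ := E.exists_mem_ne_zero_of_ne_bot hE
  have hne (i : ℕ) : ρ (g ^ i) v ≠ 0 := fun h =>
    hv ((ρ.apply_bijective (g ^ i)).1 (h.trans (map_zero _).symm))
  have hmem (i : ℕ) : ρ (g ^ i) v ∈ E.map (ρ (g ^ i)) := Submodule.mem_map_of_mem hvE
  have hchar (i : ℕ) : ∃ χ : A →* Kˣ, ∀ y : A, ∀ w ∈ E.map (ρ (g ^ i)), ρ y w = χ y • w := by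
    obtain ⟨χ, hχ⟩ := exists_character_scalarOn (ρ := ρ) (Submodule.ne_bot_iff _ |>.2
      ⟨_, hmem i, hne i⟩)
    exact ⟨χ.comp (Subgroup.inclusion (hA i)), fun y => hχ (Subgroup.inclusion (hA i) y)⟩
  choose a ha using hchar
  let φ : A → A := fun y => ⟨g⁻¹ * y * g, hconj y y.2⟩
  have hφ (i : ℕ) (y : A) : a i (φ y) = a (i + 1) y := by
    refine units_smul_left_injective (hne i) ?_
    change a i (φ y) • _ = a (i + 1) y • _
    have hy := ha (i + 1) y _ (hmem (i + 1))
    rw [pow_succ', map_mul, Module.End.mul_apply] at hy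
    rw [← ha i (φ y) _ (hmem i)]
    exact apply_inv_mul_mul_eq_smul_iff.2 hy
  have hap : a p = a 0 := MonoidHom.ext fun y => by
    refine units_smul_left_injective hv ?_
    change a p y • v = a 0 y • v
    rw [← ha p y v (hp.symm ▸ hvE), ← ha 0 y v (by simpa using hvE)]
  refine .of_subgroupOf
    ((generatedOver_coinvariants a φ hφ hap).mono (sup_le ?_ fun y hy => ?_) le_top)
  · rw [Subgroup.closure_le]
    rintro _ ⟨y, rfl⟩
    refine Subgroup.mem_sup_right ?_
    have hcomm := Subgroup.commutator_mem_commutator (Subgroup.mem_top g⁻¹)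
      (Subgroup.mem_top (y : G))
    rwa [commutatorElement_def, inv_inv] at hcomm
  · exact Subgroup.mem_sup_left <| mem_scalarOn_iSup (c := a 0 y) fun i w hw =>
      (ha i y w hw).trans (congrArg (· • w) (Subgroup.mem_iInf.1 hy i))

theorem generatedOver_scalarOn_iSup_translates [Finite G] [Fact p.Prime] (hG : IsPGroup p G)
    {H : Subgroup G} [H.Normal] (hgen : Subgroup.zpowers g ⊔ H = ⊤) (hgp : g ^ p ∈ H) (hE : E ≠ ⊥)
    (hH : ∀ h ∈ H, E ≤ E.comap (ρ h))
    (ih : ∀ L ≤ H, ∀ σ : Representation K L E, GeneratedOver (scalarOn σ ⊤) ⊤ m) :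
    GeneratedOver (scalarOn ρ (⨆ i, E.map (ρ (g ^ i)))) ⊤ (p * m + 2) := by
  have : Group.IsNilpotent G := hG.isNilpotent
  have hp : E.map (ρ (g ^ p)) = E := map_eq_of_forall_le_comap hH hgp
  have hperiodic : Function.Periodic (fun i => E.map (ρ (g ^ i))) p := fun i => by
    simp only [← map_translate, hp]
  have hHconj (h : G) (hh : h ∈ H) (g : G) : g⁻¹ * h * g ∈ H :=
    Subgroup.Normal.conj_mem' inferInstance h hh g
  set A : Subgroup G := (⨅ i ∈ Finset.range p, scalarOn ρ (E.map (ρ (g ^ i)))) ⊓ H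
  have hA (i : ℕ) : A ≤ scalarOn ρ (E.map (ρ (g ^ i))) := by
    rw [← hperiodic.map_mod_nat i]
    exact inf_le_left.trans
      (iInf₂_le _ (Finset.mem_range.2 (i.mod_lt (Fact.out : p.Prime).pos)))
  have hconj : ∀ h ∈ A, g⁻¹ * h * g ∈ A := fun h hh => by
    refine ⟨Subgroup.mem_iInf.2 fun i => Subgroup.mem_iInf.2 fun _ =>
      inv_mul_mul_mem_scalarOn_iff.2 ?_, ?_⟩
    · simpa only [← map_translate 1, pow_one] using hA (1 + i) hh
    · exact hHconj h (Subgroup.mem_inf.1 hh).2 g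
  have hHA : GeneratedOver A H (p * m) := by
    simpa only [Finset.card_range] using GeneratedOver.iInf_inf (Finset.range p)
      fun i _ L hL => generatedOver_scalarOn_map
        (fun h hh => hH _ (hHconj h (hL hh) (g ^ i))) (ih L hL)
  have htop : GeneratedOver H ⊤ 1 := hgen ▸ GeneratedOver.zpowers_sup g H
  have hcomm := ((generatedOver_of_le_scalarOn_translates hE hp hA hconj).trans hHA).trans htop
  exact ((hcomm.mono inf_le_left le_top).of_sup_commutator).mono_card (by omega)

end Translates

section Induction

variable {K G V : Type*} [Field K] [Group G] [AddCommGroup V] [Module K V]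
  {ρ : Representation K G V} {p : ℕ}

theorem finrank_iSup_of_iSupIndep [FiniteDimensional K V] {ι : Type*} [Fintype ι]
    {U : ι → Submodule K V} (h : iSupIndep U) :
    Module.finrank K ↥(⨆ i, U i) = ∑ i, Module.finrank K (U i) := by
  classical
  rw [Submodule.iSup_eq_range_dfinsupp_lsum,
    LinearMap.finrank_range_of_inj h.dfinsupp_lsum_injective]
  exact Module.finrank_directSum (R := K) (M := fun i => U i)

theorem exists_character_comm [Nontrivial V] {z : G} (hz : ∀ g : G, ⁅g, z⁆ ∈ scalarOn ρ ⊤) :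
    ∃ ζ : G →* Kˣ, ∀ g v, ρ z (ρ g v) = ζ g • ρ g (ρ z v) := by
  have hne : ρ z ≠ 0 := fun h => by
    obtain ⟨v, hv⟩ := exists_ne (0 : V)
    exact hv ((ρ.apply_bijective z).1 (by rw [h, LinearMap.zero_apply, LinearMap.zero_apply]))
  have hconj (g : G) : ρ.linHom ρ g (ρ z) = ρ ⁅g, z⁆ * ρ z := by
    rw [Representation.linHom_apply, ← Module.End.mul_eq_comp, ← Module.End.mul_eq_comp,
      ← map_mul, ← map_mul, ← map_mul, ← mul_assoc, commutatorElement_def, inv_mul_cancel_right]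
  obtain ⟨χ, hχ⟩ := exists_character (ρ := ρ.linHom ρ) hne fun g => (hz g).imp fun c hc => by
    rw [hconj]
    exact LinearMap.ext fun v => hc (ρ z v) trivial
  refine ⟨χ⁻¹, fun g v => eq_inv_smul_iff.2 ?_⟩
  have h := LinearMap.congr_fun (hχ g) (ρ g v)
  rw [Representation.linHom_apply, LinearMap.comp_apply, LinearMap.comp_apply,
    Representation.inv_self_apply] at h
  exact h.symm

section CommutatorCharacter

variable {z : G} {ζ : G →* Kˣ} (hζ : ∀ g v, ρ z (ρ g v) = ζ g • ρ g (ρ z v))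
include hζ

theorem pow_character_comm_eq_one [Nontrivial V] (hz : z ^ p ∈ scalarOn ρ ⊤) (g : G) :
    ζ g ^ p = 1 := by
  have hpow (k : ℕ) (v : V) : ρ (z ^ k) (ρ g v) = ζ g ^ k • ρ g (ρ (z ^ k) v) := by
    induction k with
    | zero => simp
    | succ k ih =>
      rw [pow_succ', map_mul, Module.End.mul_apply, ih, LinearMap.map_smul_of_tower, hζ, smul_smul,
        Module.End.mul_apply, ← pow_succ]
  obtain ⟨c, hc⟩ := hz
  obtain ⟨v, hv⟩ := exists_ne (0 : V)
  have hv' : ρ g v ≠ 0 := fun h => hv ((ρ.apply_bijective g).1 (h.trans (map_zero _).symm))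
  have h : c • ρ g v = (ζ g ^ p * c) • ρ g v := by
    rw [← hc _ trivial, hpow, hc v trivial, LinearMap.map_smul_of_tower, smul_smul]
  exact right_eq_mul.1 (units_smul_left_injective hv' h)

theorem map_eigenspace_le (μ : K) (g : G) :
    (Module.End.eigenspace (ρ z) μ).map (ρ g) ≤ Module.End.eigenspace (ρ z) (ζ g * μ) := by
  rintro _ ⟨v, hv, rfl⟩
  rw [Module.End.mem_eigenspace_iff, hζ, Module.End.mem_eigenspace_iff.1 hv, map_smul, mul_smul]
  rfl

theorem iSupIndep_map_eigenspace [Fact p.Prime] {μ : K} (hμ : μ ≠ 0) {g : G} (hg : ζ g ≠ 1)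
    (hgp : ζ g ^ p = 1) :
    iSupIndep fun i : Fin p => (Module.End.eigenspace (ρ z) μ).map (ρ (g ^ (i : ℕ))) := by
  have hinj : Function.Injective fun i : Fin p => (ζ (g ^ (i : ℕ)) : K) * μ := fun i j hij => by
    have hij := Units.ext (mul_right_cancel₀ hμ hij)
    rw [map_pow, map_pow] at hij
    have hord : orderOf (ζ g) = p := orderOf_eq_prime hgp hg
    exact Fin.ext (pow_injOn_Iio_orderOf (hord ▸ i.2) (hord ▸ j.2) hij)
  exact ((Module.End.eigenspaces_iSupIndep (ρ z)).comp hinj).mono fun i => map_eigenspace_le hζ μ _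

end CommutatorCharacter

theorem exists_iSupIndep_translates [Finite G] [Fact p.Prime] (hG : IsPGroup p G) [IsAlgClosed K]
    [FiniteDimensional K V] [Nontrivial V] (hρ : scalarOn ρ ⊤ ≠ ⊤) :
    ∃ (H : Subgroup G) (g : G) (E : Submodule K V), H.Normal ∧ Subgroup.zpowers g ⊔ H = ⊤ ∧
      g ^ p ∈ H ∧ E ≠ ⊥ ∧ E ≠ ⊤ ∧ (∀ h ∈ H, E ≤ E.comap (ρ h)) ∧
      (H = ⊤ ∨ iSupIndep fun i : Fin p => E.map (ρ (g ^ (i : ℕ)))) := by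
  obtain ⟨z, hz, hzp, hcomm⟩ := exists_notMem_forall_commutator_mem hG _ hρ
  obtain ⟨ζ, hζ⟩ := exists_character_comm hcomm
  have hpow := pow_character_comm_eq_one hζ hzp
  have : Finite ζ.range := .of_surjective _ ζ.rangeRestrict_surjective
  obtain ⟨g, hg⟩ := exists_zpowers_sup_ker_eq_top ζ
  obtain ⟨μ, hμ⟩ := Module.End.exists_eigenvalue (ρ z)
  have hμ0 : μ ≠ 0 := by
    rintro rfl
    obtain ⟨v, hv⟩ := hμ.exists_hasEigenvector
    exact hv.2 ((ρ.apply_bijective z).1 (by rw [hv.apply_eq_smul, zero_smul, map_zero]))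
  refine ⟨ζ.ker, g, Module.End.eigenspace (ρ z) μ, inferInstance, hg, ?_, hμ, fun htop => ?_,
    fun h hh => ?_, ?_⟩
  · rw [MonoidHom.mem_ker, map_pow, hpow]
  · exact hz ⟨.mk0 μ hμ0, fun v _ => Module.End.mem_eigenspace_iff.1 (htop ▸ trivial)⟩
  · rw [← Submodule.map_le_iff_le_comap]
    simpa only [MonoidHom.mem_ker.1 hh, Units.val_one, one_mul] using map_eigenspace_le hζ μ h
  · rcases eq_or_ne (ζ g) 1 with hg1 | hg1
    · left
      rwa [sup_eq_right.2 (Subgroup.zpowers_le.2 (MonoidHom.mem_ker.2 hg1))] at hg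
    · exact .inr (iSupIndep_map_eigenspace hζ hμ0 hg1 (hpow g))

theorem exists_generatedOver_scalarOn [Finite G] [Fact p.Prime] (hp : p ≠ 2) (hG : IsPGroup p G)
    [IsAlgClosed K] [FiniteDimensional K V] [Nontrivial V] (hρ : scalarOn ρ ⊤ ≠ ⊤)
    (ih : ∀ (L : Subgroup G) (E : Submodule K V), E ≠ ⊥ → E ≠ ⊤ → ∀ σ : Representation K L E,
      GeneratedOver (scalarOn σ ⊤) ⊤ (Module.finrank K E - 1)) :
    ∃ W : Submodule K V, W ≠ ⊥ ∧ GeneratedOver (scalarOn ρ W) ⊤ (Module.finrank K W - 1) := by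
  obtain ⟨H, g, E, hH, hgen, hgp, hbot, htop, hinv, rfl | hindep⟩ :=
    exists_iSupIndep_translates hG hρ
  · refine ⟨E, hbot, ?_⟩
    have h := generatedOver_scalarOn_map (g := 1) (fun h _ => by simpa using hinv h trivial)
      (ih ⊤ E hbot htop)
    rwa [map_one, Module.End.one_eq_id, Submodule.map_id, inf_top_eq] at h
  · have hrank (i : ℕ) : Module.finrank K (E.map (ρ (g ^ i))) = Module.finrank K E :=
      (Submodule.equivMapOfInjective _ (ρ.apply_bijective (g ^ i)).1 E).finrank_eq.symm
    have hle : p * Module.finrank K E ≤ Module.finrank K ↥(⨆ i : ℕ, E.map (ρ (g ^ i))) := by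
      have hsum := finrank_iSup_of_iSupIndep hindep
      simp only [hrank, Finset.sum_const, Finset.card_univ, Fintype.card_fin, smul_eq_mul] at hsum
      rw [← hsum]
      exact Submodule.finrank_mono (iSup_comp_le (fun i : ℕ => E.map (ρ (g ^ i))) Fin.val)
    have hE : 0 < Module.finrank K E := Submodule.one_le_finrank_iff.2 hbot
    have hp3 : 3 ≤ p := (Fact.out : p.Prime).two_le.lt_of_ne' hp
    have hpE : p ≤ p * Module.finrank K E := Nat.le_mul_of_pos_right p hE
    refine ⟨⨆ i : ℕ, E.map (ρ (g ^ i)), Submodule.one_le_finrank_iff.1 (by omega), ?_⟩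
    refine (generatedOver_scalarOn_iSup_translates hG hgen hgp hbot hinv
      fun L _ => ih L E hbot htop).mono_card ?_
    rw [Nat.mul_sub_one]
    omega

theorem generatedOver_ker_of_generatedOver_scalarOn [Finite G] [FiniteDimensional K V]
    (h : Nontrivial V → GeneratedOver (scalarOn ρ ⊤) ⊤ (Module.finrank K V - 1)) :
    GeneratedOver ρ.ker ⊤ (Module.finrank K V) := by
  cases subsingleton_or_nontrivial V
  · have hker : ρ.ker = ⊤ := eq_top_iff.2 fun g _ => LinearMap.ext fun v => Subsingleton.elim _ _
    exact hker ▸ .self _ _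
  · have hpos := Module.finrank_pos (R := K) (M := V)
    exact (generatedOver_ker_scalarOn_top.trans (h ‹_›)).mono_card (by omega)

theorem generatedOver_scalarOn_top [Finite G] [Fact p.Prime] (hp : p ≠ 2) (hG : IsPGroup p G)
    [IsAlgClosed K] (hpK : (p : K) ≠ 0) [FiniteDimensional K V] [Nontrivial V]
    (ρ : Representation K G V) : GeneratedOver (scalarOn ρ ⊤) ⊤ (Module.finrank K V - 1) := by
  induction hn : Module.finrank K V using Nat.strong_induction_on generalizing G V with | _ n ih
  subst hn
  by_cases hρ : scalarOn ρ ⊤ = ⊤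
  · exact hρ ▸ .self _ _
  obtain ⟨W, hW, hWgen⟩ := exists_generatedOver_scalarOn hp hG hρ fun L E hbot htop σ => by
    have := Submodule.nontrivial_iff_ne_bot.2 hbot
    exact ih _ (Submodule.finrank_lt htop) (hG.to_subgroup L) σ rfl
  have horder (g : G) : (orderOf g : K) ≠ 0 := by
    obtain ⟨k, hk⟩ := IsPGroup.iff_orderOf.1 hG g
    rw [hk, Nat.cast_pow]
    exact pow_ne_zero k hpK
  have hWpos : 0 < Module.finrank K W := Submodule.one_le_finrank_iff.2 hW
  have hsum := W.finrank_quotient_add_finrank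
  have hquot := generatedOver_scalarOn_of_quotient (ρ := ρ) horder hW fun σ =>
    generatedOver_ker_of_generatedOver_scalarOn (ρ := σ) fun _ =>
      ih _ (by omega) (hG.to_subgroup _) σ rfl
  exact (hquot.trans hWgen).mono_card (by omega)

end Induction

section ProjectiveLinear

theorem GeneratedOver.generatedByAtMost {G G' : Type*} [Group G] [Group G'] {N : Subgroup G}
    {m : ℕ} (h : GeneratedOver N ⊤ m) {f : G →* G'} (hf : Function.Surjective f)
    (hN : N ≤ f.ker) : GeneratedByAtMost G' m := by
  obtain ⟨S, hcard, hS⟩ := h.map f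
  rw [(Subgroup.map_eq_bot_iff N).2 hN, sup_bot_eq, Subgroup.map_top_of_surjective f hf] at hS
  exact ⟨S, hcard, hS⟩

theorem finite_comap_of_finite_ker {G G' : Type*} [Group G] [Group G'] (f : G →* G')
    [Finite f.ker] (H : Subgroup G') [Finite H] : Finite (H.comap f) := by
  have hker : Finite (f.subgroupComap H).ker :=
    .of_injective (fun x => (⟨x.1.1, congrArg Subtype.val (MonoidHom.mem_ker.1 x.2)⟩ : f.ker))
      fun _ _ hxy => Subtype.ext (Subtype.ext (congrArg (fun y : f.ker => (y : G)) hxy))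
  exact (f.subgroupComap H).finite_iff_finite_ker_range.2 ⟨hker, inferInstance⟩

theorem exists_isPGroup_map_eq {G G' : Type*} [Group G] [Group G'] {p : ℕ} [Fact p.Prime]
    {f : G →* G'} (hf : Function.Surjective f) [Finite f.ker] (H : Subgroup G') [Finite H]
    (hH : IsPGroup p H) : ∃ P : Subgroup G, Finite P ∧ IsPGroup p P ∧ P.map f = H := by
  have : Finite (H.comap f) := finite_comap_of_finite_ker f H
  obtain ⟨P⟩ : Nonempty (Sylow p (H.comap f)) := inferInstance
  have hsurj := f.subgroupComap_surjective_of_surjective H hf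
  have htop : P.map (f.subgroupComap H) = ⊤ :=
    ((P.mapSurjective hsurj).3 (hH.of_equiv Subgroup.topEquiv.symm) le_top).symm
  refine ⟨P.map (H.comap f).subtype,
    .of_surjective _ ((H.comap f).subtype.subgroupMap_surjective P), P.2.map _, ?_⟩
  rw [Subgroup.map_map]
  calc P.map (f.comp (H.comap f).subtype) = (P.map (f.subgroupComap H)).map H.subtype := by
        rw [Subgroup.map_map]; rfl
    _ = H := by rw [htop, ← MonoidHom.range_eq_map, Subgroup.range_subtype]

variable {K ι : Type*} [Field K] [Fintype ι] [DecidableEq ι]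

theorem mem_center_of_mulVec_eq_smul {A : SpecialLinearGroup ι K} {c : K}
    (hA : ∀ w : ι → K, A.1 *ᵥ w = c • w) : A ∈ Subgroup.center (SpecialLinearGroup ι K) := by
  have hscalar : scalar ι c = A.1 := Matrix.ext_of_mulVec_single fun i => by
    rw [hA, scalar_apply, ← smul_one_eq_diagonal, smul_mulVec, one_mulVec]
  refine Matrix.SpecialLinearGroup.mem_center_iff.2 ⟨c, ?_, hscalar⟩
  rw [← A.2, ← hscalar, scalar_apply, det_diagonal, Finset.prod_const, Finset.card_univ]

theorem finite_ker_toPGL :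
    Finite (SpecialLinearGroup.toPGL : SpecialLinearGroup ι K →* ProjGenLinGroup ι K).ker := by
  have : NeZero (max (Fintype.card ι) 1) := ⟨by positivity⟩
  rw [SpecialLinearGroup.toPGL_ker]
  exact .of_equiv _ SpecialLinearGroup.center_equiv_rootsOfUnity.toEquiv.symm

variable [IsAlgClosed K]

theorem toPGL_surjective [Nonempty ι] : Function.Surjective
    (SpecialLinearGroup.toPGL : SpecialLinearGroup ι K →* ProjGenLinGroup ι K) := by
  intro x
  obtain ⟨y, rfl⟩ := ProjectiveSpecialLinearGroup.isoPSLOfAlgClosedOfNonempty.symm.surjective x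
  obtain ⟨A, rfl⟩ := QuotientGroup.mk_surjective y
  exact ⟨A, rfl⟩

theorem stmt_10_general {p : ℕ} [Fact p.Prime] (hp : p ≠ 2) (hpK : (p : K) ≠ 0) {n : ℕ} [NeZero n]
    (G : Subgroup (GL (Fin n) K ⧸ Subgroup.center (GL (Fin n) K))) [Finite G] (hG : IsPGroup p G) :
    GeneratedByAtMost G (n - 1) := by
  let π : SpecialLinearGroup (Fin n) K →* GL (Fin n) K ⧸ Subgroup.center (GL (Fin n) K) :=
    SpecialLinearGroup.toPGL
  have : Finite π.ker := finite_ker_toPGL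
  obtain ⟨P, hfin, hP, rfl⟩ := exists_isPGroup_map_eq (f := π) toPGL_surjective G hG
  let ρ : Representation K P (Fin n → K) :=
    (toLinAlgEquiv' : _ ≃ₐ[K] Module.End K (Fin n → K)).toMonoidHom.comp
      (SpecialLinearGroup.coeMonoidHom.comp P.subtype)
  have hgen := generatedOver_scalarOn_top hp hP hpK ρ
  rw [Module.finrank_fin_fun] at hgen
  refine hgen.generatedByAtMost (π.subgroupMap_surjective P) ?_
  rintro g ⟨c, hc⟩
  have hg : g.1 ∈ Subgroup.center (SpecialLinearGroup (Fin n) K) :=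
    mem_center_of_mulVec_eq_smul (c := c) fun w => hc w trivial
  rw [← SpecialLinearGroup.toPGL_ker] at hg
  exact Subtype.ext hg

end ProjectiveLinear

theorem stmt_10 (n : ℕ) (h₁ : 3 < n) (h₂ : n < 9)
    (G : Subgroup (GL (Fin n) ℂ ⧸ Subgroup.center (GL (Fin n) ℂ))) [Finite G]
    (hG : IsPGroup 3 G) : GeneratedByAtMost G (n - 1) := by
  have : NeZero n := ⟨by omega⟩
  exact stmt_10_general (p := 3) (by decide) (by norm_num) G hG
end
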